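/- Let γ > −1. Suppose that for each n, {P_{k,n}^{(γ)} : 0 ≤ k ≤ n} is an orthonormal basis of V_n(W_γ) and, for each (i,j) ∈ {(1,1),(1,0),(0,1)}, {P_{k,n}^{(γ),i,j} : 0 ≤ k ≤ n} is an orthonormal basis of V_n(W_γ^{(i,j)}) (orthonormality with respect to integration against the respective weight on Ω). Set b^{(i,j)} := (a_{w^{(i,j)}}^γ / a_w^γ)^{1/2} and s(x,y) := (2xy, x²+y²−1). Then for every n ≥ 0: the 2n+1 polynomials ₁Q_{k,2n}(x,y) := P_{k,n}^{(γ)}(s(x,y)) (0 ≤ k ≤ n) and ₂Q_{k,2n}(x,y) := b^{(1,1)} (x²−y²) P_{k,n−1}^{(γ),1,1}(s(x,y)) (0 ≤ k ≤ n−1) form an orthonormal basis of V_{2n}(𝒲_γ), and the 2n+2 polynomials ₁Q_{k,2n+1}(x,y) := b^{(0,1)} (x+y) P_{k,n}^{(γ),0,1}(s(x,y)) (0 ≤ k ≤ n) and ₂Q_{k,2n+1}(x,y) := b^{(1,0)} (x−y) P_{k,n}^{(γ),1,0}(s(x,y)) (0 ≤ k ≤ n) form an orthonormal basis of V_{2n+1}(𝒲_γ),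 where orthogonality and orthonormality are with respect to ⟨f,g⟩ := ∫_{[−1,1]²} f g 𝒲_γ. -/

import Mathlib

open MeasureTheory Real Set Filter
open scoped ENNReal

noncomputable section

/-- The parabolic-type domain `Ω`, the image of the triangle `-1 < x < y < 1`
under `(x, y) ↦ (x + y, x y)`. -/
def omegaDom : Set (ℝ × ℝ) :=
  {q | ∃ x y : ℝ, -1 < x ∧ x < y ∧ y < 1 ∧ q = (x + y, x * y)}

/-- The square `[-1,1]²`. -/
def sqDom : Set (ℝ × ℝ) := Icc (-1 : ℝ) 1 ×ˢ Icc (-1 : ℝ) 1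

/-- The open triangle `-1 < x < y < 1`. -/
def triDom : Set (ℝ × ℝ) := {q | -1 < q.1 ∧ q.1 < q.2 ∧ q.2 < 1}

/-- The smaller root `x(u,v)` of `t² - u t + v = 0`. -/
def xRoot (q : ℝ × ℝ) : ℝ := (q.1 - Real.sqrt (q.1 ^ 2 - 4 * q.2)) / 2

/-- The larger root `y(u,v)` of `t² - u t + v = 0`. -/
def yRoot (q : ℝ × ℝ) : ℝ := (q.1 + Real.sqrt (q.1 ^ 2 - 4 * q.2)) / 2

/-- Evaluation of a two-variable polynomial at a point of `ℝ²`. -/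
def evalP (P : MvPolynomial (Fin 2) ℝ) (q : ℝ × ℝ) : ℝ :=
  MvPolynomial.eval ![q.1, q.2] P

/-- The space `V_n(W)` of orthogonal polynomials of degree `n` for the weight `W`
on the domain `D`: polynomials of exact total degree `n` orthogonal to all
polynomials of lower degree. -/
def Vpoly (D : Set (ℝ × ℝ)) (W : ℝ × ℝ → ℝ) (n : ℕ) : Set (MvPolynomial (Fin 2) ℝ) :=
  {P | P.totalDegree = n ∧ ∀ Q : MvPolynomial (Fin 2) ℝ, Q.totalDegree < n →
    (∫ q in D, evalP P q * evalP Q q * W q) = 0}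

/-- `Q 0, …, Q n` is an orthonormal basis of `V_n(W)` on `D`. -/
def isONBVn (D : Set (ℝ × ℝ)) (W : ℝ × ℝ → ℝ) (n : ℕ)
    (Q : ℕ → MvPolynomial (Fin 2) ℝ) : Prop :=
  (∀ k, k ≤ n → Q k ∈ Vpoly D W n) ∧
  (∀ k, k ≤ n → ∀ j, j ≤ n →
    (∫ q in D, evalP (Q k) q * evalP (Q j) q * W q) = if k = j then 1 else 0) ∧
  (∀ R ∈ Vpoly D W n, R ∈ Submodule.span ℝ (Q '' Set.Iic n))

/-- `K` is the reproducing kernel of `Π_n²` in `L²(W)` on the domain `D`: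
it is a polynomial function, for each fixed `x ∈ D` it is a polynomial of total
degree `≤ n` in the second variable, and it reproduces every polynomial of total
degree `≤ n`. -/
def IsRK (D : Set (ℝ × ℝ)) (W : ℝ × ℝ → ℝ) (n : ℕ) (K : ℝ × ℝ → ℝ × ℝ → ℝ) : Prop :=
  (∃ KP : MvPolynomial (Fin 4) ℝ,
    ∀ x y : ℝ × ℝ, K x y = MvPolynomial.eval ![x.1, x.2, y.1, y.2] KP) ∧
  (∀ x ∈ D, ∃ P : MvPolynomial (Fin 2) ℝ, P.totalDegree ≤ n ∧ ∀ y, K x y = evalP P y) ∧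
  (∀ P : MvPolynomial (Fin 2) ℝ, P.totalDegree ≤ n →
    ∀ x ∈ D, (∫ y in D, K x y * evalP P y * W y) = evalP P x)

/-- `p` is the sequence of orthonormal polynomials with respect to the weight `w`
on `[-1,1]`: `p n` has degree exactly `n`, positive leading coefficient, and the
`p n` are orthonormal in `L²(w)`. -/
def IsONPS (w : ℝ → ℝ) (p : ℕ → Polynomial ℝ) : Prop :=
  (∀ n, (p n).natDegree = n) ∧ (∀ n, 0 < (p n).leadingCoeff) ∧
  (∀ n m, (∫ x in Icc (-1:ℝ) 1, (p n).eval x * (p m).eval x * w x)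
    = if n = m then 1 else 0)

/-- The Christoffel–Darboux kernel `k_n(x,y) = ∑_{j=0}^n p_j(x) p_j(y)`. -/
def CDK (p : ℕ → Polynomial ℝ) (n : ℕ) (x y : ℝ) : ℝ :=
  ∑ j ∈ Finset.range (n + 1), (p j).eval x * (p j).eval y

/-- The Jacobi factor `J_{a,b}(x) = (1-x)^a (1+x)^b`. -/
def Jw (a b : ℝ) (x : ℝ) : ℝ := (1 - x) ^ a * (1 + x) ^ b

/-- The factor `J*_{a,b}(u,v) = (1-u+v)^a (1+u+v)^b` on `Ω`. -/
def JstarW (a b : ℝ) (q : ℝ × ℝ) : ℝ := (1 - q.1 + q.2) ^ a * (1 + q.1 + q.2) ^ b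

/-- Modulus of continuity of `ψ` on `[-1,1]`. -/
def modCont (ψ : ℝ → ℝ) (t : ℝ) : ℝ :=
  sSup {d : ℝ | ∃ x ∈ Icc (-1:ℝ) 1, ∃ y ∈ Icc (-1:ℝ) 1, |x - y| ≤ t ∧ d = |ψ x - ψ y|}

/-- The generalized Jacobi class `GJ`. -/
def IsGJ (w : ℝ → ℝ) : Prop :=
  ∃ (r : ℕ) (ψ : ℝ → ℝ) (γ₀ γ₁ : ℝ) (γs xs : Fin r → ℝ),
    -1 < γ₀ ∧ -1 < γ₁ ∧ (∀ i, -1 < γs i) ∧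
    StrictMono xs ∧ (∀ i, xs i ∈ Ioo (-1:ℝ) 1) ∧
    ContinuousOn ψ (Icc (-1:ℝ) 1) ∧ (∀ x ∈ Icc (-1:ℝ) 1, 0 < ψ x) ∧
    IntegrableOn (fun t => modCont ψ t / t) (Ioc (0:ℝ) 1) ∧
    (∀ x : ℝ, |x| ≤ 1 → w x = ψ x * (1 - x) ^ γ₀ * (1 + x) ^ γ₁ * ∏ i, |x - xs i| ^ γs i) ∧
    (∀ x : ℝ, 1 < |x| → w x = 0)

/-- The `L^p`-norm `‖f‖_{w,e}` on `[-1,1]` (as an extended nonnegative real). -/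
def lpnormI (w : ℝ → ℝ) (e : ℝ) (f : ℝ → ℝ) : ℝ≥0∞ :=
  (∫⁻ x in Icc (-1:ℝ) 1, ENNReal.ofReal (|f x| ^ e * w x)) ^ (1 / e)

/-- The `L^p`-norm `‖f‖_{W,e}` on a planar domain `D` (as an extended nonnegative real). -/
def lpnormD (D : Set (ℝ × ℝ)) (W : ℝ × ℝ → ℝ) (e : ℝ) (f : ℝ × ℝ → ℝ) : ℝ≥0∞ :=
  (∫⁻ q in D, ENNReal.ofReal (|f q| ^ e * W q)) ^ (1 / e)

/-- The operator `s_n^{i,j}(w; f, x)` built from the Christoffel–Darboux kernel of the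
orthonormal polynomials `pij` of the weight `J_{i,j} w`. -/
def snOp (w : ℝ → ℝ) (pij : ℕ → Polynomial ℝ) (i j : ℝ) (n : ℕ) (f : ℝ → ℝ) (x : ℝ) : ℝ :=
  Jw (i/2) (j/2) x * ∫ y in Icc (-1:ℝ) 1, f y * CDK pij n x y * Jw (i/2) (j/2) y * w y

/-- Substitution `(x, y) ↦ (2 x y, x² + y² - 1)` on two-variable polynomials. -/
def quadSub (P : MvPolynomial (Fin 2) ℝ) : MvPolynomial (Fin 2) ℝ :=
  MvPolynomial.aeval
    ![2 * MvPolynomial.X 0 * MvPolynomial.X 1,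
      MvPolynomial.X 0 ^ 2 + MvPolynomial.X 1 ^ 2 - 1] P

/-- A one-variable polynomial viewed as a polynomial in the first variable. -/
def polyX (q : Polynomial ℝ) : MvPolynomial (Fin 2) ℝ :=
  Polynomial.aeval (MvPolynomial.X 0) q

/-- A one-variable polynomial viewed as a polynomial in the second variable. -/
def polyY (q : Polynomial ℝ) : MvPolynomial (Fin 2) ℝ :=
  Polynomial.aeval (MvPolynomial.X 1) q

/-! ### Analysis -/

def sMap (q : ℝ × ℝ) : ℝ × ℝ := (2 * q.1 * q.2, q.1 ^ 2 + q.2 ^ 2 - 1)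

def wedgeDom : Set (ℝ × ℝ) := {q | -q.2 < q.1 ∧ q.1 < q.2 ∧ q.2 < 1}

def sDeriv (p : ℝ × ℝ) : ℝ × ℝ →L[ℝ] ℝ × ℝ :=
  (Matrix.toLin (.finTwoProd ℝ) (.finTwoProd ℝ)
    !![2 * p.2, 2 * p.1; 2 * p.1, 2 * p.2]).toContinuousLinearMap

theorem hasFDerivAt_sMap (p : ℝ × ℝ) : HasFDerivAt sMap (sDeriv p) p := by
  unfold sDeriv
  rw [Matrix.toLin_finTwoProd_toContinuousLinearMap]
  have h1 : HasFDerivAt (fun q : ℝ × ℝ => q.1) (ContinuousLinearMap.fst ℝ ℝ ℝ) p := hasFDerivAt_fst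
  have h2 : HasFDerivAt (fun q : ℝ × ℝ => q.2) (ContinuousLinearMap.snd ℝ ℝ ℝ) p := hasFDerivAt_snd
  have h := HasFDerivAt.prodMk (𝕜 := ℝ) ((h1.const_mul 2).mul h2)
    (((h1.pow 2).add (h2.pow 2)).sub_const 1)
  refine HasFDerivAt.congr_fderiv h ?_
  ext <;> simp [mul_comm]

theorem det_sDeriv (p : ℝ × ℝ) : (sDeriv p).det = 4 * (p.2 ^ 2 - p.1 ^ 2) := by
  unfold sDeriv
  rw [ContinuousLinearMap.det, LinearMap.coe_toContinuousLinearMap, LinearMap.det_toLin,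
    Matrix.det_fin_two_of]
  ring

theorem wedge_meas : MeasurableSet wedgeDom := by
  unfold wedgeDom
  apply IsOpen.measurableSet
  exact (isOpen_lt (by fun_prop) (by fun_prop)).and
    ((isOpen_lt (by fun_prop) (by fun_prop)).and (isOpen_lt (by fun_prop) (by fun_prop)))

theorem sMap_injOn : InjOn sMap wedgeDom := by
  rintro ⟨x, y⟩ ⟨h1, h2, h3⟩ ⟨x', y'⟩ ⟨h1', h2', h3'⟩ h
  simp only [sMap, Prod.mk.injEq] at h h1 h2 h1' h2' ⊢
  have e1 : x + y = x' + y' := by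
    have : (x + y) ^ 2 = (x' + y') ^ 2 := by linarith [h.1, h.2]
    exact (pow_left_inj₀ (by linarith) (by linarith) two_ne_zero).1 this
  have e2 : y - x = y' - x' := by
    have : (y - x) ^ 2 = (y' - x') ^ 2 := by linarith [h.1, h.2]
    exact (pow_left_inj₀ (by linarith) (by linarith) two_ne_zero).1 this
  constructor <;> linarith

theorem sMap_image : sMap '' wedgeDom = omegaDom := by
  ext ⟨u, v⟩
  constructor
  · rintro ⟨⟨x, y⟩, ⟨h1, h2, h3⟩, h⟩
    simp only [sMap, Prod.mk.injEq] at h h1 h2 h3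
    obtain ⟨rfl, rfl⟩ := h
    have hx : 0 < 1 - x ^ 2 := by nlinarith
    have hy : 0 < 1 - y ^ 2 := by nlinarith
    have hp : 0 < (1 - x ^ 2) * (1 - y ^ 2) := mul_pos hx hy
    set r := Real.sqrt ((1 - x ^ 2) * (1 - y ^ 2)) with hr
    have hr0 : 0 < r := Real.sqrt_pos.2 hp
    have hr2 : r ^ 2 = (1 - x ^ 2) * (1 - y ^ 2) := Real.sq_sqrt hp.le
    have hxy1 : 0 < 1 - x * y := by nlinarith
    have hxy2 : 0 < 1 + x * y := by nlinarith
    have hd : 0 < (x - y) ^ 2 := by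
      have : x - y ≠ 0 := sub_ne_zero.2 h2.ne
      positivity
    have hs : 0 < (x + y) ^ 2 := by apply pow_pos; linarith
    have a1 : r < 1 - x * y := by
      apply lt_of_pow_lt_pow_left₀ 2 hxy1.le
      rw [hr2]; nlinarith
    have a2 : r < 1 + x * y := by
      apply lt_of_pow_lt_pow_left₀ 2 hxy2.le
      rw [hr2]; nlinarith
    refine ⟨x * y - r, x * y + r, by linarith, by linarith, by linarith, ?_⟩
    ext
    · simp; ring
    · simp only
      have : (x * y - r) * (x * y + r) = (x * y) ^ 2 - r ^ 2 := by ring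
      rw [this, hr2]; ring
  · rintro ⟨a, b, h1, h2, h3, h⟩
    simp only [Prod.mk.injEq] at h
    obtain ⟨rfl, rfl⟩ := h
    have hA : 0 < (1 + a) * (1 + b) := mul_pos (by linarith) (by linarith)
    have hB : 0 < (1 - a) * (1 - b) := mul_pos (by linarith) (by linarith)
    set A := Real.sqrt ((1 + a) * (1 + b)) with hAd
    set B := Real.sqrt ((1 - a) * (1 - b)) with hBd
    have hA0 : 0 < A := Real.sqrt_pos.2 hA
    have hB0 : 0 < B := Real.sqrt_pos.2 hB
    have hA2 : A ^ 2 = (1 + a) * (1 + b) := Real.sq_sqrt hA.le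
    have hB2 : B ^ 2 = (1 - a) * (1 - b) := Real.sq_sqrt hB.le
    have hab : 0 < (b - a) ^ 2 := by apply pow_pos; linarith
    have a1 : A < (2 + a + b) / 2 := by
      apply lt_of_pow_lt_pow_left₀ 2 (by linarith)
      rw [hA2]; nlinarith
    have a2 : B < (2 - a - b) / 2 := by
      apply lt_of_pow_lt_pow_left₀ 2 (by linarith)
      rw [hB2]; nlinarith
    refine ⟨((A - B) / 2, (A + B) / 2), ⟨?_, ?_, ?_⟩, ?_⟩
    · simp only; linarith
    · simp only; linarith
    · simp only; linarith
    · simp only [sMap, Prod.mk.injEq]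
      constructor <;> nlinarith

theorem omega_meas : MeasurableSet omegaDom := by
  rw [← sMap_image]
  exact wedge_meas.image_of_continuousOn_injOn
    (fun x _ => (hasFDerivAt_sMap x).continuousAt.continuousWithinAt) sMap_injOn

theorem sq_ae : (sqDom : Set (ℝ × ℝ)) =ᵐ[volume] Ioo (-1 : ℝ) 1 ×ˢ Ioo (-1 : ℝ) 1 := by
  unfold sqDom
  rw [Measure.volume_eq_prod]
  exact (Measure.set_prod_ae_eq Ioo_ae_eq_Icc Ioo_ae_eq_Icc).symm

theorem mp_swap : MeasurePreserving (Prod.swap : ℝ × ℝ → ℝ × ℝ) volume volume := by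
  rw [Measure.volume_eq_prod]; exact Measure.measurePreserving_swap

theorem emb_swap : MeasurableEmbedding (Prod.swap : ℝ × ℝ → ℝ × ℝ) :=
  MeasurableEquiv.prodComm.measurableEmbedding

theorem mp_neg : MeasurePreserving (fun q : ℝ × ℝ => -q) volume volume :=
  Measure.measurePreserving_neg _

theorem emb_neg : MeasurableEmbedding (fun q : ℝ × ℝ => -q) :=
  (MeasurableEquiv.neg (ℝ × ℝ)).measurableEmbedding

theorem sq_fold (F : ℝ × ℝ → ℝ) (hs : ∀ q, F q.swap = F q) (hn : ∀ q, F (-q) = F q)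
    (h0 : ∀ q, q.1 ^ 2 = q.2 ^ 2 → F q = 0) (hi : IntegrableOn F wedgeDom) :
    IntegrableOn F sqDom ∧ ∫ q in sqDom, F q = 4 * ∫ q in wedgeDom, F q := by
  set G := wedgeDom.indicator F with hG
  have hGi : Integrable G := (integrable_indicator_iff wedge_meas).2 hi
  have hG1 : Integrable (fun q : ℝ × ℝ => G q.swap) := (mp_swap.integrable_comp_emb emb_swap).2 hGi
  have hG2 : Integrable (fun q : ℝ × ℝ => G (-q)) := (mp_neg.integrable_comp_emb emb_neg).2 hGi
  have hG3 : Integrable (fun q : ℝ × ℝ => G (-q.swap)) := (mp_swap.integrable_comp_emb emb_swap).2 hG2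
  have i1 : ∫ q : ℝ × ℝ, G q.swap = ∫ q : ℝ × ℝ, G q := mp_swap.integral_comp emb_swap G
  have i2 : ∫ q : ℝ × ℝ, G (-q) = ∫ q : ℝ × ℝ, G q := mp_neg.integral_comp emb_neg G
  have i3 : ∫ q : ℝ × ℝ, G (-q.swap) = ∫ q : ℝ × ℝ, G q :=
    (mp_swap.integral_comp emb_swap (fun q : ℝ × ℝ => G (-q))).trans i2
  have key : (Ioo (-1 : ℝ) 1 ×ˢ Ioo (-1 : ℝ) 1).indicator F
      = fun q => G q + G q.swap + (G (-q) + G (-q.swap)) := by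
    funext ⟨x, y⟩
    have e1 : F (y, x) = F (x, y) := hs (x, y)
    have e2 : F (-x, -y) = F (x, y) := hn (x, y)
    have e3 : F (-y, -x) = F (x, y) := (hn (y, x)).trans e1
    simp only [hG, Set.indicator_apply, wedgeDom, Set.mem_ofPred_eq, Prod.swap_prod_mk,
      Prod.neg_mk, mem_prod, mem_Ioo, e1, e2, e3, neg_neg]
    rcases lt_trichotomy x y with h | h | h
    · rcases lt_trichotomy (-y) x with h' | h' | h'
      · rw [if_neg (show ¬ (-x < y ∧ y < x ∧ x < 1) by intro h; linarith [h.2.1]),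
          if_neg (show ¬ (y < -x ∧ -x < -y ∧ -y < 1) by intro h; linarith [h.1]),
          if_neg (show ¬ (x < -y ∧ -y < -x ∧ -x < 1) by intro h; linarith [h.1])]
        by_cases hy : y < 1
        · rw [if_pos ⟨⟨by linarith, by linarith⟩, by linarith, hy⟩, if_pos ⟨h', h, hy⟩]; ring
        · rw [if_neg (fun h => hy h.2.2), if_neg (fun h => hy h.2.2)]; ring
      · rw [h0 (x, y) (by simp only; rw [← h']; ring)]; simp
      · rw [if_neg (show ¬ (-y < x ∧ x < y ∧ y < 1) by intro h; linarith [h.1]),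
          if_neg (show ¬ (-x < y ∧ y < x ∧ x < 1) by intro h; linarith [h.2.1]),
          if_neg (show ¬ (y < -x ∧ -x < -y ∧ -y < 1) by intro h; linarith [h.2.1])]
        by_cases hy : -x < 1
        · rw [if_pos ⟨⟨by linarith, by linarith⟩, by linarith, by linarith⟩,
            if_pos ⟨by linarith, by linarith, hy⟩]; ring
        · rw [if_neg (fun h => hy (by linarith [h.1.1])), if_neg (fun h => hy h.2.2)]; ring
    · rw [h0 (x, y) (by simp only; rw [← h])]; simp
    · rcases lt_trichotomy (-y) x with h' | h' | h'
      · rw [if_neg (show ¬ (-y < x ∧ x < y ∧ y < 1) by intro h; linarith [h.2.1]),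
          if_neg (show ¬ (y < -x ∧ -x < -y ∧ -y < 1) by intro h; linarith [h.1]),
          if_neg (show ¬ (x < -y ∧ -y < -x ∧ -x < 1) by intro h; linarith [h.1])]
        by_cases hy : x < 1
        · rw [if_pos ⟨⟨by linarith, by linarith⟩, by linarith, by linarith⟩,
            if_pos ⟨by linarith, h, hy⟩]; ring
        · rw [if_neg (fun h => hy h.1.2), if_neg (fun h => hy h.2.2)]; ring
      · rw [h0 (x, y) (by simp only; rw [← h']; ring)]; simp
      · rw [if_neg (show ¬ (-y < x ∧ x < y ∧ y < 1) by intro h; linarith [h.1]),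
          if_neg (show ¬ (-x < y ∧ y < x ∧ x < 1) by intro h; linarith [h.1]),
          if_neg (show ¬ (x < -y ∧ -y < -x ∧ -x < 1) by intro h; linarith [h.2.1])]
        by_cases hy : -y < 1
        · rw [if_pos ⟨⟨by linarith, by linarith⟩, by linarith, by linarith⟩,
            if_pos ⟨by linarith, by linarith, hy⟩]; ring
        · rw [if_neg (fun h => hy (by linarith [h.2.1])), if_neg (fun h => hy h.2.2)]; ring
  have hm : MeasurableSet (Ioo (-1 : ℝ) 1 ×ˢ Ioo (-1 : ℝ) 1) :=
    measurableSet_Ioo.prod measurableSet_Ioo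
  constructor
  · rw [integrableOn_congr_set_ae sq_ae, ← integrable_indicator_iff hm, key]
    exact (hGi.add hG1).add (hG2.add hG3)
  · rw [setIntegral_congr_set sq_ae, ← integral_indicator hm, key]
    have t1 : ∫ q : ℝ × ℝ, (G q + G q.swap + (G (-q) + G (-q.swap)))
        = (∫ q : ℝ × ℝ, (G q + G q.swap)) + ∫ q : ℝ × ℝ, (G (-q) + G (-q.swap)) :=
      integral_add (hGi.add hG1) (hG2.add hG3)
    have t2 : ∫ q : ℝ × ℝ, G q = ∫ q in wedgeDom, F q := integral_indicator wedge_meas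
    refine t1.trans ?_
    rw [integral_add hGi hG1, integral_add hG2 hG3, i1, i2, i3, t2]
    ring

/-- the transfer of integrals from `Ω` to the square -/
theorem sq_transfer (g : ℝ × ℝ → ℝ) (hi : IntegrableOn g omegaDom) :
    IntegrableOn (fun q => g (sMap q) * |q.1 ^ 2 - q.2 ^ 2|) sqDom ∧
    ∫ q in sqDom, g (sMap q) * |q.1 ^ 2 - q.2 ^ 2| = ∫ q in omegaDom, g q := by
  have hd : ∀ x ∈ wedgeDom, HasFDerivWithinAt sMap (sDeriv x) wedgeDom x :=
    fun x _ => (hasFDerivAt_sMap x).hasFDerivWithinAt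
  have e : (fun x => |(sDeriv x).det| • g (sMap x))
      = fun q : ℝ × ℝ => 4 * (g (sMap q) * |q.1 ^ 2 - q.2 ^ 2|) := by
    funext q
    rw [det_sDeriv, abs_mul, abs_sub_comm, smul_eq_mul, abs_of_pos (by norm_num : (0:ℝ) < 4)]
    ring
  have h1 := integrableOn_image_iff_integrableOn_abs_det_fderiv_smul volume wedge_meas hd
    sMap_injOn g
  have h2 := integral_image_eq_integral_abs_det_fderiv_smul volume wedge_meas hd sMap_injOn g
  rw [sMap_image] at h1 h2
  rw [e] at h1 h2
  have h3 : IntegrableOn (fun q : ℝ × ℝ => g (sMap q) * |q.1 ^ 2 - q.2 ^ 2|) wedgeDom := by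
    have := (h1.1 hi).const_mul (1 / 4)
    refine this.congr (Filter.Eventually.of_forall fun q => ?_)
    simp only
    ring
  have h4 := sq_fold (fun q : ℝ × ℝ => g (sMap q) * |q.1 ^ 2 - q.2 ^ 2|) ?_ ?_ ?_ h3
  · refine ⟨h4.1, ?_⟩
    rw [h4.2, h2, integral_const_mul]
  · intro q
    have : sMap q.swap = sMap q := by
      simp only [sMap, Prod.fst_swap, Prod.snd_swap, Prod.mk.injEq]; constructor <;> ring
    simp only [this, Prod.fst_swap, Prod.snd_swap]
    rw [abs_sub_comm]
  · intro q
    have : sMap (-q) = sMap q := by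
      simp only [sMap, Prod.fst_neg, Prod.snd_neg, Prod.mk.injEq]; constructor <;> ring
    simp only [this, Prod.fst_neg, Prod.snd_neg, neg_sq]
  · intro q hq
    simp [hq]

/-- antisymmetric functions integrate to zero over the square -/
theorem sq_anti_swap (F : ℝ × ℝ → ℝ) (h : ∀ q, F q.swap = - F q) : ∫ q in sqDom, F q = 0 := by
  have := mp_swap.setIntegral_preimage_emb emb_swap F sqDom
  have e : Prod.swap ⁻¹' sqDom = sqDom := by
    ext q; simp [sqDom, and_comm]
  rw [e] at this
  simp only [h, integral_neg] at this
  linarith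

theorem sq_anti_nswap (F : ℝ × ℝ → ℝ) (h : ∀ q, F (-q.swap) = - F q) :
    ∫ q in sqDom, F q = 0 := by
  have h1 := mp_swap.setIntegral_preimage_emb emb_swap (fun q => F (-q)) sqDom
  have h2 := mp_neg.setIntegral_preimage_emb emb_neg F sqDom
  have e : Prod.swap ⁻¹' sqDom = sqDom := by
    ext q; simp [sqDom, and_comm]
  have e2 : (fun q : ℝ × ℝ => -q) ⁻¹' sqDom = sqDom := by
    ext q
    simp only [sqDom, mem_preimage, mem_prod, mem_Icc, Prod.fst_neg, Prod.snd_neg]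
    constructor <;> rintro ⟨⟨_, _⟩, _, _⟩ <;> refine ⟨⟨?_, ?_⟩, ?_, ?_⟩ <;> linarith
  rw [e] at h1
  rw [e2] at h2
  simp only [h, integral_neg] at h1
  linarith

/-! ### Abstract orthogonality -/

def ip (D : Set (ℝ × ℝ)) (W : ℝ × ℝ → ℝ) (P Q : MvPolynomial (Fin 2) ℝ) : ℝ :=
  ∫ q in D, evalP P q * evalP Q q * W q

def PolyInt (D : Set (ℝ × ℝ)) (W : ℝ × ℝ → ℝ) : Prop :=
  ∀ P, IntegrableOn (fun q => evalP P q * W q) D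

theorem evalP_add (P Q : MvPolynomial (Fin 2) ℝ) (q) : evalP (P + Q) q = evalP P q + evalP Q q := by
  simp [evalP]

theorem evalP_mul (P Q : MvPolynomial (Fin 2) ℝ) (q) : evalP (P * Q) q = evalP P q * evalP Q q := by
  simp [evalP]

theorem evalP_smul (c : ℝ) (P : MvPolynomial (Fin 2) ℝ) (q) :
    evalP (c • P) q = c * evalP P q := by
  simp [evalP]

theorem evalP_cont (P : MvPolynomial (Fin 2) ℝ) : Continuous (evalP P) := by
  unfold evalP
  exact (MvPolynomial.continuous_eval P).comp (by
    apply continuous_pi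
    intro i
    fin_cases i
    · exact continuous_fst
    · exact continuous_snd)

theorem polyInt_mul {D W} (h : PolyInt D W) (P Q : MvPolynomial (Fin 2) ℝ) :
    IntegrableOn (fun q => evalP P q * evalP Q q * W q) D := by
  have := h (P * Q)
  simpa only [evalP_mul] using this

theorem polyInt_of_integrableOn {D W} (hD : MeasurableSet D)
    (hb : D ⊆ Icc (-2 : ℝ) 2 ×ˢ Icc (-2 : ℝ) 2) (hW : IntegrableOn W D) : PolyInt D W := by
  intro P
  have hK : IsCompact (Icc (-2 : ℝ) 2 ×ˢ Icc (-2 : ℝ) 2) := isCompact_Icc.prod isCompact_Icc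
  obtain ⟨c, hc⟩ := hK.exists_bound_of_continuousOn (evalP_cont P).continuousOn
  refine Integrable.bdd_mul (c := c) hW (evalP_cont P).aestronglyMeasurable ?_
  filter_upwards [ae_restrict_mem hD] with q hq
  exact hc q (hb hq)

theorem ip_comm (D W P Q) : ip D W P Q = ip D W Q P := by
  unfold ip; congr 1; funext q; ring

def ipL {D W} (h : PolyInt D W) (Q : MvPolynomial (Fin 2) ℝ) : MvPolynomial (Fin 2) ℝ →ₗ[ℝ] ℝ where
  toFun P := ip D W P Q
  map_add' P R := by
    unfold ip
    rw [← integral_add (polyInt_mul h P Q) (polyInt_mul h R Q)]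
    congr 1; funext q; rw [evalP_add]; ring
  map_smul' c P := by
    unfold ip
    rw [RingHom.id_apply, smul_eq_mul, ← integral_const_mul]
    congr 1; funext q; rw [evalP_smul]; ring

theorem ipL_apply {D W} (h : PolyInt D W) (Q P) : ipL h Q P = ip D W P Q := rfl

def Fam (F : ℕ → ℕ → MvPolynomial (Fin 2) ℝ) (N : ℕ) : Set (MvPolynomial (Fin 2) ℝ) :=
  {R | ∃ j k, k ≤ j ∧ j < N ∧ R = F j k}

structure GoodFam (D : Set (ℝ × ℝ)) (W : ℝ × ℝ → ℝ)
    (F : ℕ → ℕ → MvPolynomial (Fin 2) ℝ) : Prop where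
  orth : ∀ j k j' k', k ≤ j → k' ≤ j' → ip D W (F j k) (F j' k') = if j = j' ∧ k = k' then 1 else 0
  deg : ∀ j k, k ≤ j → (F j k).totalDegree ≤ j
  span : ∀ N R, R.totalDegree < N → R ∈ Submodule.span ℝ (Fam F N)

def projS (D : Set (ℝ × ℝ)) (W : ℝ × ℝ → ℝ) (F : ℕ → ℕ → MvPolynomial (Fin 2) ℝ) (N : ℕ)
    (R : MvPolynomial (Fin 2) ℝ) : MvPolynomial (Fin 2) ℝ :=
  ∑ j ∈ Finset.range N, ∑ k ∈ Finset.range (j + 1), ip D W R (F j k) • F j k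

theorem Fam_mono (F) {N M : ℕ} (h : N ≤ M) : Fam F N ⊆ Fam F M := by
  rintro R ⟨j, k, h1, h2, h3⟩
  exact ⟨j, k, h1, h2.trans_le h, h3⟩

theorem collapse {M : Type*} [AddCommMonoid M] (N j0 k0 : ℕ) (h : j0 < N) (hk : k0 ≤ j0)
    (f : ℕ → ℕ → M) :
    ∑ j ∈ Finset.range N, ∑ k ∈ Finset.range (j + 1), (if j = j0 ∧ k = k0 then f j k else 0)
      = f j0 k0 := by
  rw [Finset.sum_eq_single j0, Finset.sum_eq_single k0]
  · simp
  · intro b _ hb; simp [hb]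
  · intro hb; simp at hb; omega
  · intro b _ hb; simp [hb]
  · intro hb; simp at hb; omega

theorem projS_span {D W F} (h : PolyInt D W)
    (orth : ∀ j k j' k', k ≤ j → k' ≤ j' →
      ip D W (F j k) (F j' k') = if j = j' ∧ k = k' then 1 else 0)
    (N : ℕ) {R} (hR : R ∈ Submodule.span ℝ (Fam F N)) : projS D W F N R = R := by
  induction hR using Submodule.span_induction with
  | mem R hR =>
    obtain ⟨j0, k0, h1, h2, rfl⟩ := hR
    unfold projS
    rw [← collapse N j0 k0 h2 h1 F]
    conv_lhs => rw [collapse N j0 k0 h2 h1 F]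
    refine Finset.sum_congr rfl fun j _ => Finset.sum_congr rfl fun k hk => ?_
    rw [orth _ _ _ _ h1 (by simp at hk; omega)]
    by_cases hh : j = j0 ∧ k = k0
    · rw [if_pos ⟨hh.1.symm, hh.2.symm⟩, if_pos hh, one_smul]
    · rw [if_neg (fun h => hh ⟨h.1.symm, h.2.symm⟩), if_neg hh, zero_smul]
  | zero =>
    unfold projS
    simp only [← ipL_apply h, map_zero, zero_smul, Finset.sum_const_zero]
  | add x y _ _ hx hy =>
    have : projS D W F N (x + y) = projS D W F N x + projS D W F N y := by
      unfold projS
      simp only [← ipL_apply h, map_add, add_smul, Finset.sum_add_distrib]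
    rw [this, hx, hy]
  | smul a x _ hx =>
    have : projS D W F N (a • x) = a • projS D W F N x := by
      unfold projS
      simp only [← ipL_apply h, map_smul, Finset.smul_sum, smul_smul, smul_eq_mul]
    rw [this, hx]

theorem ip_projS {D W F} (h : PolyInt D W)
    (orth : ∀ j k j' k', k ≤ j → k' ≤ j' →
      ip D W (F j k) (F j' k') = if j = j' ∧ k = k' then 1 else 0)
    (N : ℕ) (R) (j0 k0) (h1 : k0 ≤ j0) (h2 : j0 < N) :
    ip D W (projS D W F N R) (F j0 k0) = ip D W R (F j0 k0) := by
  rw [← ipL_apply h, ← collapse N j0 k0 h2 h1 (fun j k => ip D W R (F j k))]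
  unfold projS
  simp only [map_sum, map_smul]
  refine Finset.sum_congr rfl fun j _ => Finset.sum_congr rfl fun k hk => ?_
  rw [ipL_apply, orth _ _ _ _ (by simp at hk; omega) h1]
  split_ifs <;> simp

theorem ip_span_zero {D W F} (h : PolyInt D W) (N : ℕ) (P)
    (hP : ∀ j k, k ≤ j → j < N → ip D W P (F j k) = 0) {Q}
    (hQ : Q ∈ Submodule.span ℝ (Fam F N)) : ip D W P Q = 0 := by
  rw [ip_comm, ← ipL_apply h]
  have : Submodule.span ℝ (Fam F N) ≤ LinearMap.ker (ipL h P) := by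
    rw [Submodule.span_le]
    rintro _ ⟨j, k, h1, h2, rfl⟩
    simp only [SetLike.mem_coe, LinearMap.mem_ker]
    rw [ipL_apply, ip_comm, hP j k h1 h2]
  exact this hQ

theorem projS_deg {D W F} (hd : ∀ j k, k ≤ j → (F j k).totalDegree ≤ j) (N : ℕ) (R) :
    (projS D W F (N + 1) R).totalDegree ≤ N := by
  refine MvPolynomial.totalDegree_finsetSum_le fun j hj => ?_
  refine MvPolynomial.totalDegree_finsetSum_le fun k hk => ?_
  refine (MvPolynomial.totalDegree_smul_le _ _).trans ((hd j k ?_).trans ?_) <;> simp at hj hk <;> omega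

theorem good_of_onb {D W F} (h : PolyInt D W) (ho : ∀ n, isONBVn D W n (F n)) : GoodFam D W F := by
  have orth : ∀ j k j' k', k ≤ j → k' ≤ j' →
      ip D W (F j k) (F j' k') = if j = j' ∧ k = k' then 1 else 0 := by
    intro j k j' k' hk hk'
    rcases lt_trichotomy j j' with hl | hl | hl
    · rw [if_neg (by omega), ip_comm]
      exact ((ho j').1 k' hk').2 _ (by rw [((ho j).1 k hk).1]; exact hl)
    · subst hl
      have := (ho j).2.1 k hk k' hk'
      simpa [ip] using this
    · rw [if_neg (by omega)]
      exact ((ho j).1 k hk).2 _ (by rw [((ho j').1 k' hk').1]; exact hl)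
  have hd : ∀ j k, k ≤ j → (F j k).totalDegree ≤ j := fun j k hk => (((ho j).1 k hk).1).le
  refine ⟨orth, hd, ?_⟩
  intro N
  induction N with
  | zero => intro R hR; omega
  | succ N ih =>
    intro R hR
    by_cases hlt : R.totalDegree < N
    · exact Submodule.span_mono (Fam_mono F N.le_succ) (ih R hlt)
    have hRN : R.totalDegree = N := by omega
    have hS : projS D W F N R ∈ Submodule.span ℝ (Fam F (N + 1)) := by
      unfold projS
      refine Submodule.sum_mem _ fun j hj => Submodule.sum_mem _ fun k hk => Submodule.smul_mem _ _ ?_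
      simp at hj hk
      exact Submodule.subset_span ⟨j, k, by omega, by omega, rfl⟩
    have hV : R - projS D W F N R ∈ Vpoly D W N := by
      constructor
      · rcases N with _ | N
        · simpa [projS] using hRN
        · have := projS_deg (D := D) (W := W) hd N R
          rw [sub_eq_add_neg, MvPolynomial.totalDegree_add_eq_left_of_totalDegree_lt, hRN]
          rw [MvPolynomial.totalDegree_neg]; omega
      · intro Q hQ
        refine ip_span_zero (F := F) h N _ ?_ (ih Q hQ)
        intro j k hk hj
        rw [← ipL_apply h, map_sub, ipL_apply, ipL_apply, ip_projS h orth N R j k hk hj, sub_self]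
    have h2 := (ho N).2.2 _ hV
    have h3 : Submodule.span ℝ (F N '' Set.Iic N) ≤ Submodule.span ℝ (Fam F (N + 1)) := by
      apply Submodule.span_mono
      rintro _ ⟨k, hk, rfl⟩
      exact ⟨N, k, hk, by omega, rfl⟩
    have := Submodule.add_mem _ (h3 h2) hS
    simpa using this

theorem onb_of_good {D W F} (h : PolyInt D W) (g : GoodFam D W F) (m : ℕ) :
    isONBVn D W m (F m) := by
  have orth0 : ∀ k, k ≤ m → ∀ Q : MvPolynomial (Fin 2) ℝ, Q.totalDegree < m →
      ip D W (F m k) Q = 0 := by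
    intro k hk Q hQ
    refine ip_span_zero (F := F) h m _ ?_ (g.span m Q hQ)
    intro j k' hk' hj
    rw [g.orth _ _ _ _ hk hk', if_neg (by omega)]
  refine ⟨?_, ?_, ?_⟩
  · intro k hk
    refine ⟨?_, orth0 k hk⟩
    by_contra hne
    have h1 := orth0 k hk (F m k) (lt_of_le_of_ne (g.deg m k hk) hne)
    rw [g.orth _ _ _ _ hk hk] at h1
    simp at h1
  · intro k hk j hj
    have := g.orth m k m j hk hj
    simpa [ip] using this
  · intro R hR
    have h1 := projS_span h g.orth (m + 1) (g.span (m + 1) R (by rw [hR.1]; omega))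
    rw [← h1]
    unfold projS
    refine Submodule.sum_mem _ fun j hj => Submodule.sum_mem _ fun k hk => ?_
    simp at hj hk
    by_cases hjm : j = m
    · subst hjm
      exact Submodule.smul_mem _ _ (Submodule.subset_span ⟨k, by simp; omega, rfl⟩)
    · have : ip D W R (F j k) = 0 :=
        hR.2 _ ((g.deg j k (by omega)).trans_lt (by omega))
      rw [this, zero_smul]
      exact Submodule.zero_mem _

theorem polyInt_of_onb {D W} {F : ℕ → MvPolynomial (Fin 2) ℝ} (hD : MeasurableSet D)
    (hb : D ⊆ Icc (-2 : ℝ) 2 ×ˢ Icc (-2 : ℝ) 2) (ho : isONBVn D W 0 F) : PolyInt D W := by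
  apply polyInt_of_integrableOn hD hb
  obtain ⟨c, hc⟩ : ∃ c, F 0 = MvPolynomial.C c :=
    ⟨_, MvPolynomial.totalDegree_eq_zero_iff_eq_C.1 (ho.1 0 le_rfl).1⟩
  have h1 := ho.2.1 0 le_rfl 0 le_rfl
  have h2 : ∀ q, evalP (F 0) q = c := by intro q; rw [hc]; simp [evalP]
  simp only [h2, if_true] at h1
  have h3 : IntegrableOn (fun q => c * c * W q) D := by
    by_contra hn
    rw [integral_undef hn] at h1
    norm_num at h1
  have hc0 : c ≠ 0 := by
    rintro rfl
    simp at h1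
  have := h3.const_mul (c * c)⁻¹
  refine this.congr (Filter.Eventually.of_forall fun q => ?_)
  simp only
  field_simp

/-! ### Algebra of the quadratic substitution -/

open MvPolynomial in
theorem evalP_quadSub (P : MvPolynomial (Fin 2) ℝ) (q : ℝ × ℝ) :
    evalP (quadSub P) q = evalP P (sMap q) := by
  unfold evalP quadSub
  induction P using MvPolynomial.induction_on with
  | C a => simp
  | add p r hp hr => simp only [map_add, hp, hr]
  | mul_X p i hp =>
    simp only [map_mul, hp, aeval_X, eval_X]
    congr 1
    fin_cases i <;> simp [sMap]

theorem quadSub_add (A B : MvPolynomial (Fin 2) ℝ) : quadSub (A + B) = quadSub A + quadSub B := by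
  simp [quadSub]

theorem quadSub_mul (A B : MvPolynomial (Fin 2) ℝ) : quadSub (A * B) = quadSub A * quadSub B := by
  simp [quadSub]

theorem quadSub_smul (c : ℝ) (A : MvPolynomial (Fin 2) ℝ) : quadSub (c • A) = c • quadSub A := by
  simp [quadSub]

theorem quadSub_C (c : ℝ) : quadSub (MvPolynomial.C c) = MvPolynomial.C c := by
  simp [quadSub, MvPolynomial.algebraMap_eq]

open MvPolynomial in
theorem quadSub_plus : quadSub (1 + X 0 + X 1) = ((X 0 + X 1) ^ 2 : MvPolynomial (Fin 2) ℝ) := by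
  simp [quadSub]; ring

open MvPolynomial in
theorem quadSub_minus : quadSub (1 - X 0 + X 1) = ((X 0 - X 1) ^ 2 : MvPolynomial (Fin 2) ℝ) := by
  simp [quadSub]; ring

open MvPolynomial in
theorem deg_plus_mul (A : MvPolynomial (Fin 2) ℝ) :
    ((1 + X 0 + X 1) * A).totalDegree ≤ A.totalDegree + 1 := by
  refine (totalDegree_mul _ _).trans ?_
  have h1 : (1 + X 0 + X 1 : MvPolynomial (Fin 2) ℝ).totalDegree ≤ 1 := by
    refine (totalDegree_add _ _).trans (max_le ((totalDegree_add _ _).trans ?_) ?_) <;> simp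
  omega

open MvPolynomial in
theorem deg_minus_mul (A : MvPolynomial (Fin 2) ℝ) :
    ((1 - X 0 + X 1) * A).totalDegree ≤ A.totalDegree + 1 := by
  refine (totalDegree_mul _ _).trans ?_
  have h1 : (1 - X 0 + X 1 : MvPolynomial (Fin 2) ℝ).totalDegree ≤ 1 := by
    refine (totalDegree_add _ _).trans (max_le ((totalDegree_sub _ _).trans ?_) ?_) <;> simp
  omega

open MvPolynomial in
theorem quadSub_deg (P : MvPolynomial (Fin 2) ℝ) :
    (quadSub P).totalDegree ≤ 2 * P.totalDegree := by
  unfold quadSub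
  conv_lhs => rw [P.as_sum, map_sum]
  refine totalDegree_finsetSum_le fun v hv => ?_
  have hv' := le_totalDegree hv
  rw [Finsupp.sum_fintype _ _ (by simp), Fin.sum_univ_two] at hv'
  rw [aeval_monomial, Finsupp.prod_fintype _ _ (by simp), Fin.prod_univ_two]
  have h0 : (2 * X 0 * X 1 : MvPolynomial (Fin 2) ℝ).totalDegree ≤ 2 := by
    have : (2 : MvPolynomial (Fin 2) ℝ) = C 2 := (map_ofNat C 2).symm
    rw [this]
    refine (totalDegree_mul _ _).trans ?_
    have := totalDegree_mul (C 2 : MvPolynomial (Fin 2) ℝ) (X 0)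
    simp only [totalDegree_C, totalDegree_X] at this ⊢
    omega
  have h1 : (X 0 ^ 2 + X 1 ^ 2 - 1 : MvPolynomial (Fin 2) ℝ).totalDegree ≤ 2 := by
    refine (totalDegree_sub _ _).trans (max_le ((totalDegree_add _ _).trans ?_) ?_) <;> simp
  have e0 := totalDegree_pow (2 * X 0 * X 1 : MvPolynomial (Fin 2) ℝ) (v 0)
  have e1 := totalDegree_pow (X 0 ^ 2 + X 1 ^ 2 - 1 : MvPolynomial (Fin 2) ℝ) (v 1)
  have m0 := Nat.mul_le_mul_left (v 0) h0
  have m1 := Nat.mul_le_mul_left (v 1) h1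
  refine (totalDegree_mul _ _).trans ?_
  rw [algebraMap_eq, totalDegree_C]
  have := totalDegree_mul ((2 * X 0 * X 1 : MvPolynomial (Fin 2) ℝ) ^ v 0)
    ((X 0 ^ 2 + X 1 ^ 2 - 1) ^ v 1)
  simp only [Matrix.cons_val_zero, Matrix.cons_val_one]
  omega

open MvPolynomial in
def genSet (m : ℕ) : Set (MvPolynomial (Fin 2) ℝ) :=
  {R | ∃ A : MvPolynomial (Fin 2) ℝ, (2 * A.totalDegree ≤ m ∧ R = quadSub A) ∨
    (2 * A.totalDegree + 1 ≤ m ∧ R = (X 0 + X 1) * quadSub A) ∨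
    (2 * A.totalDegree + 1 ≤ m ∧ R = (X 0 - X 1) * quadSub A) ∨
    (2 * A.totalDegree + 2 ≤ m ∧ R = (X 0 ^ 2 - X 1 ^ 2) * quadSub A)}

theorem genSet_mono {m m' : ℕ} (h : m ≤ m') : genSet m ⊆ genSet m' := by
  rintro R ⟨A, h1⟩
  refine ⟨A, ?_⟩
  rcases h1 with h1 | h1 | h1 | h1
  · exact Or.inl ⟨by omega, h1.2⟩
  · exact Or.inr (Or.inl ⟨by omega, h1.2⟩)
  · exact Or.inr (Or.inr (Or.inl ⟨by omega, h1.2⟩))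
  · exact Or.inr (Or.inr (Or.inr ⟨by omega, h1.2⟩))

open MvPolynomial in
theorem gen_plus {m : ℕ} {R} (hR : R ∈ genSet m) : (X 0 + X 1) * R ∈ genSet (m + 1) := by
  obtain ⟨A, h⟩ := hR
  have hd := deg_plus_mul A
  rcases h with ⟨h, rfl⟩ | ⟨h, rfl⟩ | ⟨h, rfl⟩ | ⟨h, rfl⟩
  · exact ⟨A, Or.inr (Or.inl ⟨by omega, rfl⟩)⟩
  · refine ⟨(1 + X 0 + X 1) * A, Or.inl ⟨by omega, ?_⟩⟩
    rw [quadSub_mul, quadSub_plus]; ring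
  · refine ⟨A, Or.inr (Or.inr (Or.inr ⟨by omega, ?_⟩))⟩
    ring
  · refine ⟨(1 + X 0 + X 1) * A, Or.inr (Or.inr (Or.inl ⟨by omega, ?_⟩))⟩
    rw [quadSub_mul, quadSub_plus]; ring

open MvPolynomial in
theorem gen_minus {m : ℕ} {R} (hR : R ∈ genSet m) : (X 0 - X 1) * R ∈ genSet (m + 1) := by
  obtain ⟨A, h⟩ := hR
  have hd := deg_minus_mul A
  rcases h with ⟨h, rfl⟩ | ⟨h, rfl⟩ | ⟨h, rfl⟩ | ⟨h, rfl⟩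
  · exact ⟨A, Or.inr (Or.inr (Or.inl ⟨by omega, rfl⟩))⟩
  · refine ⟨A, Or.inr (Or.inr (Or.inr ⟨by omega, ?_⟩))⟩
    ring
  · refine ⟨(1 - X 0 + X 1) * A, Or.inl ⟨by omega, ?_⟩⟩
    rw [quadSub_mul, quadSub_minus]; ring
  · refine ⟨(1 - X 0 + X 1) * A, Or.inr (Or.inl ⟨by omega, ?_⟩)⟩
    rw [quadSub_mul, quadSub_minus]; ring

theorem span_map_mul (T : MvPolynomial (Fin 2) ℝ) {S S' : Set (MvPolynomial (Fin 2) ℝ)}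
    (h : ∀ R ∈ S, T * R ∈ Submodule.span ℝ S') {R} (hR : R ∈ Submodule.span ℝ S) :
    T * R ∈ Submodule.span ℝ S' := by
  have : Submodule.span ℝ S ≤ (Submodule.span ℝ S').comap (LinearMap.mulLeft ℝ T) := by
    rw [Submodule.span_le]
    intro R hR
    exact h R hR
  exact this hR

open MvPolynomial in
theorem gen_X (i : Fin 2) {m : ℕ} {R} (hR : R ∈ Submodule.span ℝ (genSet m)) :
    X i * R ∈ Submodule.span ℝ (genSet (m + 1)) := by
  have h1 := span_map_mul (X 0 + X 1) (S' := genSet (m + 1))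
    (fun R hR => Submodule.subset_span (gen_plus hR)) hR
  have h2 := span_map_mul (X 0 - X 1) (S' := genSet (m + 1))
    (fun R hR => Submodule.subset_span (gen_minus hR)) hR
  have half : (C (1 / 2 : ℝ) * 2 : MvPolynomial (Fin 2) ℝ) = 1 := by
    have : (2 : MvPolynomial (Fin 2) ℝ) = C 2 := (map_ofNat C 2).symm
    rw [this, ← C_mul]; norm_num
  fin_cases i
  · have := Submodule.smul_mem _ (1 / 2 : ℝ) (Submodule.add_mem _ h1 h2)
    convert this using 1
    rw [smul_eq_C_mul]
    simp only [Fin.zero_eta]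
    linear_combination (-(X 0 * R)) * half
  · have := Submodule.smul_mem _ (1 / 2 : ℝ) (Submodule.sub_mem _ h1 h2)
    convert this using 1
    rw [smul_eq_C_mul]
    simp only [Fin.mk_one]
    linear_combination (-(X 1 * R)) * half

open MvPolynomial in
theorem mem_gen_span (P : MvPolynomial (Fin 2) ℝ) (m : ℕ) (h : P.totalDegree ≤ m) :
    P ∈ Submodule.span ℝ (genSet m) := by
  have hpow : ∀ i (n a : ℕ) (R : MvPolynomial (Fin 2) ℝ), R ∈ Submodule.span ℝ (genSet a) →
      X i ^ n * R ∈ Submodule.span ℝ (genSet (a + n)) := by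
    intro i n a R hR
    induction n with
    | zero => simpa using hR
    | succ n ih =>
      have := gen_X i ih
      rw [← mul_assoc, ← pow_succ'] at this
      exact this
  rw [P.as_sum]
  refine Submodule.sum_mem _ fun v hv => ?_
  have hv' := le_totalDegree hv
  rw [Finsupp.sum_fintype _ _ (by simp), Fin.sum_univ_two] at hv'
  rw [monomial_eq, Finsupp.prod_fintype _ _ (by simp), Fin.prod_univ_two]
  have h0 : (C (coeff v P) : MvPolynomial (Fin 2) ℝ) ∈ Submodule.span ℝ (genSet 0) :=
    Submodule.subset_span ⟨C (coeff v P), Or.inl ⟨by simp, (quadSub_C _).symm⟩⟩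
  have h1 := hpow 0 (v 0) _ _ (hpow 1 (v 1) _ _ h0)
  have h2 := Submodule.span_mono (genSet_mono (show 0 + v 1 + v 0 ≤ m by omega)) h1
  convert h2 using 1
  ring

/-! ### The orthonormal family on the square -/

theorem omega_bdd : omegaDom ⊆ Icc (-2 : ℝ) 2 ×ˢ Icc (-2 : ℝ) 2 := by
  rintro _ ⟨x, y, h1, h2, h3, rfl⟩
  refine ⟨⟨?_, ?_⟩, ?_, ?_⟩ <;> simp only <;> nlinarith

theorem sq_bdd : sqDom ⊆ Icc (-2 : ℝ) 2 ×ˢ Icc (-2 : ℝ) 2 := by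
  rintro q ⟨⟨h1, h2⟩, h3, h4⟩
  refine ⟨⟨?_, ?_⟩, ?_, ?_⟩ <;> linarith

theorem sq_meas : MeasurableSet sqDom := measurableSet_Icc.prod measurableSet_Icc

theorem root_sum (q : ℝ × ℝ) : xRoot q + yRoot q = q.1 := by
  unfold xRoot yRoot; ring

theorem root_mul (q : ℝ × ℝ) (hq : q ∈ omegaDom) : xRoot q * yRoot q = q.2 := by
  obtain ⟨x, y, _, _, _, rfl⟩ := hq
  have h : (0 : ℝ) ≤ (x + y) ^ 2 - 4 * (x * y) := by nlinarith [sq_nonneg (x - y)]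
  have := Real.sq_sqrt h
  unfold xRoot yRoot
  simp only
  nlinarith

theorem ip_transfer {W00 CW W : ℝ × ℝ → ℝ}
    (hCW : ∀ q : ℝ × ℝ, CW q = W00 (sMap q) * |q.1^2 - q.2^2|)
    (hH : PolyInt omegaDom W) (ψ : ℝ × ℝ → ℝ)
    (hW : ∀ q ∈ omegaDom, W q = ψ q * W00 q)
    (F G A B : MvPolynomial (Fin 2) ℝ)
    (hFG : ∀ q, evalP F q * evalP G q = ψ (sMap q) * (evalP A (sMap q) * evalP B (sMap q))) :
    ip sqDom CW F G = ip omegaDom W A B := by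
  have e : EqOn (fun q => evalP A q * evalP B q * W q)
      (fun q => evalP A q * evalP B q * (ψ q * W00 q)) omegaDom := by
    intro q hq
    simp only [hW q hq]
  have h1 : IntegrableOn (fun q => evalP A q * evalP B q * (ψ q * W00 q)) omegaDom :=
    (polyInt_mul hH A B).congr_fun e omega_meas
  have h2 := (sq_transfer _ h1).2
  unfold ip
  rw [setIntegral_congr_fun omega_meas e, ← h2]
  congr 1
  funext q
  rw [hCW, hFG]; ring

theorem ip_anti_swap {W00 CW : ℝ × ℝ → ℝ}
    (hCW : ∀ q : ℝ × ℝ, CW q = W00 (sMap q) * |q.1^2 - q.2^2|)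
    (F G : MvPolynomial (Fin 2) ℝ)
    (h : ∀ q, evalP F q.swap * evalP G q.swap = - (evalP F q * evalP G q)) :
    ip sqDom CW F G = 0 := by
  apply sq_anti_swap
  intro q
  have : sMap q.swap = sMap q := by
    simp only [sMap, Prod.fst_swap, Prod.snd_swap, Prod.mk.injEq]; constructor <;> ring
  rw [hCW, hCW, h, this, Prod.fst_swap, Prod.snd_swap, abs_sub_comm]
  ring

theorem ip_anti_nswap {W00 CW : ℝ × ℝ → ℝ}
    (hCW : ∀ q : ℝ × ℝ, CW q = W00 (sMap q) * |q.1^2 - q.2^2|)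
    (F G : MvPolynomial (Fin 2) ℝ)
    (h : ∀ q : ℝ × ℝ, evalP F (-q.swap) * evalP G (-q.swap) = - (evalP F q * evalP G q)) :
    ip sqDom CW F G = 0 := by
  apply sq_anti_nswap
  intro q
  have : sMap (-q.swap) = sMap q := by
    simp only [sMap, Prod.fst_swap, Prod.snd_swap, Prod.fst_neg, Prod.snd_neg, Prod.mk.injEq]
    constructor <;> ring
  rw [hCW, hCW, h, this, Prod.fst_neg, Prod.snd_neg, Prod.fst_swap, Prod.snd_swap, neg_sq, neg_sq,
    abs_sub_comm]
  ring

theorem sMap_swap (q : ℝ × ℝ) : sMap q.swap = sMap q := by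
  simp only [sMap, Prod.fst_swap, Prod.snd_swap, Prod.mk.injEq]; constructor <;> ring

theorem sMap_neg (q : ℝ × ℝ) : sMap (-q) = sMap q := by
  simp only [sMap, Prod.fst_neg, Prod.snd_neg, Prod.mk.injEq]; constructor <;> ring

section fam
open MvPolynomial

def E1 (c : ℝ) (A : MvPolynomial (Fin 2) ℝ) : MvPolynomial (Fin 2) ℝ :=
  C c * ((X 0 + X 1) * quadSub A)
def E2 (c : ℝ) (A : MvPolynomial (Fin 2) ℝ) : MvPolynomial (Fin 2) ℝ :=
  C c * ((X 0 - X 1) * quadSub A)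
def E3 (c : ℝ) (A : MvPolynomial (Fin 2) ℝ) : MvPolynomial (Fin 2) ℝ :=
  C c * ((X 0 ^ 2 - X 1 ^ 2) * quadSub A)

theorem evalP_E1 (c A q) : evalP (E1 c A) q = c * ((q.1 + q.2) * evalP A (sMap q)) := by
  unfold E1
  rw [evalP_mul, evalP_mul, evalP_quadSub]; simp [evalP]

theorem evalP_E2 (c A q) : evalP (E2 c A) q = c * ((q.1 - q.2) * evalP A (sMap q)) := by
  unfold E2
  rw [evalP_mul, evalP_mul, evalP_quadSub]; simp [evalP]

theorem evalP_E3 (c A q) : evalP (E3 c A) q = c * ((q.1 ^ 2 - q.2 ^ 2) * evalP A (sMap q)) := by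
  unfold E3
  rw [evalP_mul, evalP_mul, evalP_quadSub]; simp [evalP]

theorem deg_E1 (c A) : (E1 c A).totalDegree ≤ 2 * A.totalDegree + 1 := by
  unfold E1
  have h1 := totalDegree_mul (C c : MvPolynomial (Fin 2) ℝ) ((X 0 + X 1) * quadSub A)
  have h2 := totalDegree_mul (X 0 + X 1 : MvPolynomial (Fin 2) ℝ) (quadSub A)
  have h3 : (X 0 + X 1 : MvPolynomial (Fin 2) ℝ).totalDegree ≤ 1 :=
    (totalDegree_add _ _).trans (by simp)
  have h4 := quadSub_deg A
  rw [totalDegree_C] at h1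
  omega

theorem deg_E2 (c A) : (E2 c A).totalDegree ≤ 2 * A.totalDegree + 1 := by
  unfold E2
  have h1 := totalDegree_mul (C c : MvPolynomial (Fin 2) ℝ) ((X 0 - X 1) * quadSub A)
  have h2 := totalDegree_mul (X 0 - X 1 : MvPolynomial (Fin 2) ℝ) (quadSub A)
  have h3 : (X 0 - X 1 : MvPolynomial (Fin 2) ℝ).totalDegree ≤ 1 :=
    (totalDegree_sub _ _).trans (by simp)
  have h4 := quadSub_deg A
  rw [totalDegree_C] at h1
  omega

theorem deg_E3 (c A) : (E3 c A).totalDegree ≤ 2 * A.totalDegree + 2 := by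
  unfold E3
  have h1 := totalDegree_mul (C c : MvPolynomial (Fin 2) ℝ) ((X 0 ^ 2 - X 1 ^ 2) * quadSub A)
  have h2 := totalDegree_mul (X 0 ^ 2 - X 1 ^ 2 : MvPolynomial (Fin 2) ℝ) (quadSub A)
  have h3 : (X 0 ^ 2 - X 1 ^ 2 : MvPolynomial (Fin 2) ℝ).totalDegree ≤ 2 :=
    (totalDegree_sub _ _).trans (by simp)
  have h4 := quadSub_deg A
  rw [totalDegree_C] at h1
  omega

def QF (c11 c01 c10 : ℝ) (P00 P11 P10 P01 : ℕ → ℕ → MvPolynomial (Fin 2) ℝ) (m k : ℕ) :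
    MvPolynomial (Fin 2) ℝ :=
  if m % 2 = 0 then
    (if k ≤ m / 2 then quadSub (P00 k (m / 2))
      else E3 c11 (P11 (k - m / 2 - 1) (m / 2 - 1)))
  else
    (if k ≤ m / 2 then E1 c01 (P01 k (m / 2)) else E2 c10 (P10 (k - m / 2 - 1) (m / 2)))

variable (c11 c01 c10 : ℝ) (P00 P11 P10 P01 : ℕ → ℕ → MvPolynomial (Fin 2) ℝ)

theorem QF_even (n k : ℕ) : QF c11 c01 c10 P00 P11 P10 P01 (2 * n) k =
    if k ≤ n then quadSub (P00 k n) else E3 c11 (P11 (k - n - 1) (n - 1)) := by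
  unfold QF
  rw [if_pos (by omega), show 2 * n / 2 = n by omega]

theorem QF_odd (n k : ℕ) : QF c11 c01 c10 P00 P11 P10 P01 (2 * n + 1) k =
    if k ≤ n then E1 c01 (P01 k n) else E2 c10 (P10 (k - n - 1) n) := by
  unfold QF
  rw [if_neg (by omega), show (2 * n + 1) / 2 = n by omega]

theorem QF_cases (m k : ℕ) (hk : k ≤ m) :
    (∃ n, k ≤ n ∧ m = 2 * n ∧ QF c11 c01 c10 P00 P11 P10 P01 m k = quadSub (P00 k n)) ∨
    (∃ n, k ≤ n ∧ m = 2 * n + 1 ∧ QF c11 c01 c10 P00 P11 P10 P01 m k = E1 c01 (P01 k n)) ∨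
    (∃ n k', k' ≤ n ∧ m = 2 * n + 1 ∧ k = n + 1 + k' ∧
      QF c11 c01 c10 P00 P11 P10 P01 m k = E2 c10 (P10 k' n)) ∨
    (∃ n k', k' ≤ n ∧ m = 2 * n + 2 ∧ k = n + 2 + k' ∧
      QF c11 c01 c10 P00 P11 P10 P01 m k = E3 c11 (P11 k' n)) := by
  rcases Nat.even_or_odd' m with ⟨n, rfl | rfl⟩
  · rw [QF_even]
    by_cases h : k ≤ n
    · exact Or.inl ⟨n, h, rfl, if_pos h⟩
    · refine Or.inr (Or.inr (Or.inr ⟨n - 1, k - n - 1, by omega, by omega, by omega, if_neg h⟩))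
  · rw [QF_odd]
    by_cases h : k ≤ n
    · exact Or.inr (Or.inl ⟨n, h, rfl, if_pos h⟩)
    · refine Or.inr (Or.inr (Or.inl ⟨n, k - n - 1, by omega, by omega, by omega, if_neg h⟩))

theorem QF_mem0 (n k N : ℕ) (hk : k ≤ n) (h : 2 * n < N) :
    quadSub (P00 k n) ∈ Fam (QF c11 c01 c10 P00 P11 P10 P01) N :=
  ⟨2 * n, k, by omega, h, by rw [QF_even, if_pos hk]⟩

theorem QF_mem1 (n k N : ℕ) (hk : k ≤ n) (h : 2 * n + 1 < N) :
    E1 c01 (P01 k n) ∈ Fam (QF c11 c01 c10 P00 P11 P10 P01) N :=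
  ⟨2 * n + 1, k, by omega, h, by rw [QF_odd, if_pos hk]⟩

theorem QF_mem2 (n k N : ℕ) (hk : k ≤ n) (h : 2 * n + 1 < N) :
    E2 c10 (P10 k n) ∈ Fam (QF c11 c01 c10 P00 P11 P10 P01) N :=
  ⟨2 * n + 1, n + 1 + k, by omega, h, by
    rw [QF_odd, if_neg (by omega), show n + 1 + k - n - 1 = k by omega]⟩

theorem QF_mem3 (n k N : ℕ) (hk : k ≤ n) (h : 2 * n + 2 < N) :
    E3 c11 (P11 k n) ∈ Fam (QF c11 c01 c10 P00 P11 P10 P01) N :=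
  ⟨2 * (n + 1), n + 2 + k, by omega, by omega, by
    rw [QF_even, if_neg (by omega), show n + 2 + k - (n + 1) - 1 = k by omega,
      show n + 1 - 1 = n by omega]⟩

theorem span_lin (L : MvPolynomial (Fin 2) ℝ →ₗ[ℝ] MvPolynomial (Fin 2) ℝ)
    {S S' : Set (MvPolynomial (Fin 2) ℝ)}
    (h : ∀ R ∈ S, L R ∈ Submodule.span ℝ S') {R} (hR : R ∈ Submodule.span ℝ S) :
    L R ∈ Submodule.span ℝ S' := by
  have : Submodule.span ℝ S ≤ (Submodule.span ℝ S').comap L := by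
    rw [Submodule.span_le]
    intro R hR
    exact h R hR
  exact this hR

def qL : MvPolynomial (Fin 2) ℝ →ₗ[ℝ] MvPolynomial (Fin 2) ℝ where
  toFun := quadSub
  map_add' := quadSub_add
  map_smul' := quadSub_smul

/-- spanning with a factor `T` -/
theorem span_factor {D W} {P : ℕ → ℕ → MvPolynomial (Fin 2) ℝ}
    (g : GoodFam D W (fun n k => P k n)) (c : ℝ) (hc : c ≠ 0) (T : MvPolynomial (Fin 2) ℝ)
    (S' : Set (MvPolynomial (Fin 2) ℝ)) (A : MvPolynomial (Fin 2) ℝ)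
    (h : ∀ n k, k ≤ n → n ≤ A.totalDegree → C c * (T * quadSub (P k n)) ∈ S') :
    T * quadSub A ∈ Submodule.span ℝ S' := by
  have h1 := g.span (A.totalDegree + 1) A (by omega)
  refine span_lin ((LinearMap.mulLeft ℝ T).comp qL) ?_ h1
  rintro _ ⟨j, k, hk, hj, rfl⟩
  have h2 := Submodule.smul_mem _ c⁻¹ (Submodule.subset_span (R := ℝ) (h j k hk (by omega)))
  rw [smul_eq_C_mul, ← mul_assoc, ← C_mul, inv_mul_cancel₀ hc, C_1, one_mul] at h2
  exact h2

theorem QF_good {W00 W11 W10 W01 CW : ℝ × ℝ → ℝ}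
    (hCW : ∀ q : ℝ × ℝ, CW q = W00 (sMap q) * |q.1^2 - q.2^2|)
    (hc11 : 0 < c11) (hc01 : 0 < c01) (hc10 : 0 < c10)
    (H00 : PolyInt omegaDom W00) (H11 : PolyInt omegaDom W11) (H10 : PolyInt omegaDom W10)
    (H01 : PolyInt omegaDom W01)
    (hW11 : ∀ q ∈ omegaDom, W11 q = (c11 ^ 2 * ((1 - q.1 + q.2) * (1 + q.1 + q.2))) * W00 q)
    (hW10 : ∀ q ∈ omegaDom, W10 q = (c10 ^ 2 * (1 - q.1 + q.2)) * W00 q)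
    (hW01 : ∀ q ∈ omegaDom, W01 q = (c01 ^ 2 * (1 + q.1 + q.2)) * W00 q)
    (g00 : GoodFam omegaDom W00 (fun n k => P00 k n))
    (g11 : GoodFam omegaDom W11 (fun n k => P11 k n))
    (g10 : GoodFam omegaDom W10 (fun n k => P10 k n))
    (g01 : GoodFam omegaDom W01 (fun n k => P01 k n)) :
    GoodFam sqDom CW (QF c11 c01 c10 P00 P11 P10 P01) := by
  have s00 : ∀ A B, ip sqDom CW (quadSub A) (quadSub B) = ip omegaDom W00 A B := by
    intro A B
    refine ip_transfer hCW H00 (fun _ => 1) (fun q _ => by ring) _ _ _ _ fun q => ?_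
    rw [evalP_quadSub, evalP_quadSub]; ring
  have s11 : ∀ A B, ip sqDom CW (E3 c11 A) (E3 c11 B) = ip omegaDom W11 A B := by
    intro A B
    refine ip_transfer hCW H11 _ hW11 _ _ _ _ fun q => ?_
    rw [evalP_E3, evalP_E3]; simp only [sMap]; ring
  have s10 : ∀ A B, ip sqDom CW (E2 c10 A) (E2 c10 B) = ip omegaDom W10 A B := by
    intro A B
    refine ip_transfer hCW H10 _ hW10 _ _ _ _ fun q => ?_
    rw [evalP_E2, evalP_E2]; simp only [sMap]; ring
  have s01 : ∀ A B, ip sqDom CW (E1 c01 A) (E1 c01 B) = ip omegaDom W01 A B := by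
    intro A B
    refine ip_transfer hCW H01 _ hW01 _ _ _ _ fun q => ?_
    rw [evalP_E1, evalP_E1]; simp only [sMap]; ring
  have x01 : ∀ A B, ip sqDom CW (quadSub A) (E1 c01 B) = 0 := fun A B =>
    ip_anti_nswap hCW _ _ fun q => by
      simp only [evalP_quadSub, evalP_E1, sMap_neg, sMap_swap, Prod.fst_neg, Prod.snd_neg,
        Prod.fst_swap, Prod.snd_swap]; ring
  have x02 : ∀ A B, ip sqDom CW (quadSub A) (E2 c10 B) = 0 := fun A B =>
    ip_anti_swap hCW _ _ fun q => by
      simp only [evalP_quadSub, evalP_E2, sMap_swap, Prod.fst_swap, Prod.snd_swap]; ring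
  have x03 : ∀ A B, ip sqDom CW (quadSub A) (E3 c11 B) = 0 := fun A B =>
    ip_anti_swap hCW _ _ fun q => by
      simp only [evalP_quadSub, evalP_E3, sMap_swap, Prod.fst_swap, Prod.snd_swap]; ring
  have x12 : ∀ A B, ip sqDom CW (E1 c01 A) (E2 c10 B) = 0 := fun A B =>
    ip_anti_swap hCW _ _ fun q => by
      simp only [evalP_E1, evalP_E2, sMap_swap, Prod.fst_swap, Prod.snd_swap]; ring
  have x13 : ∀ A B, ip sqDom CW (E1 c01 A) (E3 c11 B) = 0 := fun A B =>
    ip_anti_swap hCW _ _ fun q => by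
      simp only [evalP_E1, evalP_E3, sMap_swap, Prod.fst_swap, Prod.snd_swap]; ring
  have x23 : ∀ A B, ip sqDom CW (E2 c10 A) (E3 c11 B) = 0 := fun A B =>
    ip_anti_nswap hCW _ _ fun q => by
      simp only [evalP_E2, evalP_E3, sMap_neg, sMap_swap, Prod.fst_neg, Prod.snd_neg,
        Prod.fst_swap, Prod.snd_swap]; ring
  refine ⟨?_, ?_, ?_⟩
  · intro j k j' k' hk hk'
    rcases QF_cases c11 c01 c10 P00 P11 P10 P01 j k hk with
      ⟨n, hn, hj, e⟩ | ⟨n, hn, hj, e⟩ | ⟨n, l, hn, hj, hl, e⟩ | ⟨n, l, hn, hj, hl, e⟩ <;>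
    rcases QF_cases c11 c01 c10 P00 P11 P10 P01 j' k' hk' with
      ⟨n', hn', hj', e'⟩ | ⟨n', hn', hj', e'⟩ | ⟨n', l', hn', hj', hl', e'⟩ |
        ⟨n', l', hn', hj', hl', e'⟩ <;>
    rw [e, e']
    · rw [s00, g00.orth _ _ _ _ hn hn']; congr 1; apply propext; omega
    · rw [x01, if_neg (by omega)]
    · rw [x02, if_neg (by omega)]
    · rw [x03, if_neg (by omega)]
    · rw [ip_comm, x01, if_neg (by omega)]
    · rw [s01, g01.orth _ _ _ _ hn hn']; congr 1; apply propext; omega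
    · rw [x12, if_neg (by omega)]
    · rw [x13, if_neg (by omega)]
    · rw [ip_comm, x02, if_neg (by omega)]
    · rw [ip_comm, x12, if_neg (by omega)]
    · rw [s10, g10.orth _ _ _ _ hn hn']; congr 1; apply propext; omega
    · rw [x23, if_neg (by omega)]
    · rw [ip_comm, x03, if_neg (by omega)]
    · rw [ip_comm, x13, if_neg (by omega)]
    · rw [ip_comm, x23, if_neg (by omega)]
    · rw [s11, g11.orth _ _ _ _ hn hn']; congr 1; apply propext; omega
  · intro j k hk
    rcases QF_cases c11 c01 c10 P00 P11 P10 P01 j k hk with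
      ⟨n, hn, hj, e⟩ | ⟨n, hn, hj, e⟩ | ⟨n, l, hn, hj, hl, e⟩ | ⟨n, l, hn, hj, hl, e⟩ <;> rw [e]
    · have h1 := g00.deg n k hn
      have h2 := quadSub_deg (P00 k n)
      omega
    · have h1 := g01.deg n k hn
      have h2 := deg_E1 c01 (P01 k n)
      omega
    · have h1 := g10.deg n l hn
      have h2 := deg_E2 c10 (P10 l n)
      omega
    · have h1 := g11.deg n l hn
      have h2 := deg_E3 c11 (P11 l n)
      omega
  · intro N R hR
    have h1 := mem_gen_span R (N - 1) (by omega)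
    refine span_lin LinearMap.id ?_ h1
    rintro R ⟨A, ⟨h, rfl⟩ | ⟨h, rfl⟩ | ⟨h, rfl⟩ | ⟨h, rfl⟩⟩ <;> rw [LinearMap.id_apply]
    · have := span_factor g00 1 one_ne_zero 1 (Fam (QF c11 c01 c10 P00 P11 P10 P01) N) A
        (fun n k hk hn => by
          rw [C_1, one_mul, one_mul]
          exact QF_mem0 _ _ _ _ _ _ _ n k N hk (by omega))
      rwa [one_mul] at this
    · exact span_factor g01 c01 hc01.ne' _ _ A
        (fun n k hk hn => QF_mem1 _ _ _ _ _ _ _ n k N hk (by omega))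
    · exact span_factor g10 c10 hc10.ne' _ _ A
        (fun n k hk hn => QF_mem2 _ _ _ _ _ _ _ n k N hk (by omega))
    · exact span_factor g11 c11 hc11.ne' _ _ A
        (fun n k hk hn => QF_mem3 _ _ _ _ _ _ _ n k N hk (by omega))

end fam

/-- the orthonormal bases of `V_{2n}(𝒲_γ)` and `V_{2n+1}(𝒲_γ)` on the
square, built from orthonormal bases for the weights `W_γ` and `W_γ^{(i,j)}` on `Ω`. -/
theorem stmt_6
    (w : ℝ → ℝ) (hw0 : ∀ x, 0 ≤ w x)
    (hwi : IntegrableOn w (Icc (-1:ℝ) 1))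
    (hw1 : (∫ x in Icc (-1:ℝ) 1, w x) = 1)
    (hwm : ∀ k : ℕ, IntegrableOn (fun x => x ^ k * w x) (Icc (-1:ℝ) 1))
    (γ : ℝ) (hγ : -1 < γ)
    (a00 a11 a10 a01 : ℝ)
    (ha00p : 0 < a00) (ha11p : 0 < a11) (ha10p : 0 < a10) (ha01p : 0 < a01)
    (ha00 : (∫ q in sqDom, a00 * w q.1 * w q.2 * |q.1 - q.2| ^ (2*γ+1)) = 1)
    (ha11 : (∫ q in sqDom, a11 * ((1 - q.1) * (1 + q.1) * w q.1)
        * ((1 - q.2) * (1 + q.2) * w q.2) * |q.1 - q.2| ^ (2*γ+1)) = 1)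
    (ha10 : (∫ q in sqDom, a10 * ((1 - q.1) * w q.1)
        * ((1 - q.2) * w q.2) * |q.1 - q.2| ^ (2*γ+1)) = 1)
    (ha01 : (∫ q in sqDom, a01 * ((1 + q.1) * w q.1)
        * ((1 + q.2) * w q.2) * |q.1 - q.2| ^ (2*γ+1)) = 1)
    (W00 W11 W10 W01 : ℝ × ℝ → ℝ)
    (hW00 : ∀ q : ℝ × ℝ, W00 q
      = 2 * a00 * w (xRoot q) * w (yRoot q) * (q.1^2 - 4*q.2) ^ γ)
    (hW11 : ∀ q : ℝ × ℝ, W11 q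
      = 2 * a11 * ((1 - xRoot q) * (1 + xRoot q) * w (xRoot q))
        * ((1 - yRoot q) * (1 + yRoot q) * w (yRoot q)) * (q.1^2 - 4*q.2) ^ γ)
    (hW10 : ∀ q : ℝ × ℝ, W10 q
      = 2 * a10 * ((1 - xRoot q) * w (xRoot q))
        * ((1 - yRoot q) * w (yRoot q)) * (q.1^2 - 4*q.2) ^ γ)
    (hW01 : ∀ q : ℝ × ℝ, W01 q
      = 2 * a01 * ((1 + xRoot q) * w (xRoot q))
        * ((1 + yRoot q) * w (yRoot q)) * (q.1^2 - 4*q.2) ^ γ)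
    (CW : ℝ × ℝ → ℝ)
    (hCW : ∀ q : ℝ × ℝ, CW q = W00 (2*q.1*q.2, q.1^2 + q.2^2 - 1) * |q.1^2 - q.2^2|)
    (P00 P11 P10 P01 : ℕ → ℕ → MvPolynomial (Fin 2) ℝ)
    (hP00 : ∀ n, isONBVn omegaDom W00 n (fun k => P00 k n))
    (hP11 : ∀ n, isONBVn omegaDom W11 n (fun k => P11 k n))
    (hP10 : ∀ n, isONBVn omegaDom W10 n (fun k => P10 k n))
    (hP01 : ∀ n, isONBVn omegaDom W01 n (fun k => P01 k n)) :
    ∀ n : ℕ,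
      isONBVn sqDom CW (2*n) (fun k =>
        if k ≤ n then quadSub (P00 k n)
        else MvPolynomial.C (Real.sqrt (a11 / a00)) *
          ((MvPolynomial.X 0 ^ 2 - MvPolynomial.X 1 ^ 2)
            * quadSub (P11 (k - n - 1) (n - 1)))) ∧
      isONBVn sqDom CW (2*n+1) (fun k =>
        if k ≤ n then MvPolynomial.C (Real.sqrt (a01 / a00)) *
          ((MvPolynomial.X 0 + MvPolynomial.X 1) * quadSub (P01 k n))
        else MvPolynomial.C (Real.sqrt (a10 / a00)) *
          ((MvPolynomial.X 0 - MvPolynomial.X 1) * quadSub (P10 (k - n - 1) n))) := by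
  have H00 := polyInt_of_onb omega_meas omega_bdd (hP00 0)
  have H11 := polyInt_of_onb omega_meas omega_bdd (hP11 0)
  have H10 := polyInt_of_onb omega_meas omega_bdd (hP10 0)
  have H01 := polyInt_of_onb omega_meas omega_bdd (hP01 0)
  have hCW' : ∀ q : ℝ × ℝ, CW q = W00 (sMap q) * |q.1^2 - q.2^2| := hCW
  have HC : PolyInt sqDom CW := by
    apply polyInt_of_integrableOn sq_meas sq_bdd
    have h1 := H00 1
    have h2 : IntegrableOn W00 omegaDom := by simpa [evalP] using h1
    have h3 := (sq_transfer W00 h2).1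
    have : CW = fun q => W00 (sMap q) * |q.1^2 - q.2^2| := funext hCW'
    rw [this]; exact h3
  have sq : ∀ a : ℝ, 0 < a → Real.sqrt (a / a00) ^ 2 * a00 = a := fun a ha => by
    rw [Real.sq_sqrt (by positivity)]; field_simp
  have good := QF_good (Real.sqrt (a11 / a00)) (Real.sqrt (a01 / a00)) (Real.sqrt (a10 / a00))
    P00 P11 P10 P01 hCW' (Real.sqrt_pos.2 (by positivity)) (Real.sqrt_pos.2 (by positivity))
    (Real.sqrt_pos.2 (by positivity)) H00 H11 H10 H01
    (fun q hq => by
      rw [hW11, hW00, ← root_mul q hq]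
      conv_lhs => rw [← sq a11 ha11p]
      have hs := root_sum q
      rw [show 1 - q.1 + xRoot q * yRoot q = (1 - xRoot q) * (1 - yRoot q) by rw [← hs]; ring,
        show 1 + q.1 + xRoot q * yRoot q = (1 + xRoot q) * (1 + yRoot q) by rw [← hs]; ring]
      ring)
    (fun q hq => by
      rw [hW10, hW00, ← root_mul q hq]
      conv_lhs => rw [← sq a10 ha10p]
      have hs := root_sum q
      rw [show 1 - q.1 + xRoot q * yRoot q = (1 - xRoot q) * (1 - yRoot q) by rw [← hs]; ring]
      ring)
    (fun q hq => by
      rw [hW01, hW00, ← root_mul q hq]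
      conv_lhs => rw [← sq a01 ha01p]
      have hs := root_sum q
      rw [show 1 + q.1 + xRoot q * yRoot q = (1 + xRoot q) * (1 + yRoot q) by rw [← hs]; ring]
      ring)
    (good_of_onb H00 hP00) (good_of_onb H11 hP11) (good_of_onb H10 hP10) (good_of_onb H01 hP01)
  intro n
  constructor
  · have h := onb_of_good HC good (2 * n)
    have e := funext (QF_even (Real.sqrt (a11 / a00)) (Real.sqrt (a01 / a00))
      (Real.sqrt (a10 / a00)) P00 P11 P10 P01 n)
    rw [e] at h
    exact h
  · have h := onb_of_good HC good (2 * n + 1)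
    have e := funext (QF_odd (Real.sqrt (a11 / a00)) (Real.sqrt (a01 / a00))
      (Real.sqrt (a10 / a00)) P00 P11 P10 P01 n)
    rw [e] at h
    exact h
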